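/- Let N ≥ 1, let ξ_1, ..., ξ_N be real numbers, and let I be a bounded interval of positive length. Then every function v in the linear span of {e^{i ξ_j x} : 1 ≤ j ≤ N} satisfies sup_{x ∈ I} |v(x)| ≤ N^{1/2} |I|^{−1/2} ‖v‖_{L²(3I)}. -/

import Mathlib

/-!
The set of functions `V = span {e^{i ξ_j x}}` has dimension at most `N` and is invariant under
translation.

For any `N` continuous functions, diagonalizing their Gram matrix over `[a, b]` gives functions
`f_k` spanning the same space, orthogonal in `L²[a, b]`, with squared norms `l_k ≥ 0`
(`exists_orthogonal_system`). By Cauchy–Schwarz, `|v(y)|² ≤ K(y) ‖v‖²_{L²[a, b]}` for `v` in the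
span, where `K = ∑ |f_k|² / l_k` over the indices with `l_k ≠ 0`. As `∫ K ≤ N`, some `y ∈ [a, b]`
has `K(y) ≤ N / (b - a)`: at this single point the desired bound holds for all of the span, with
`L²[a, b]` on the right (`exists_point_bound`).

Given an arbitrary `x ∈ [a, b]`, apply this to the translate `t ↦ v(t + x - y)`, which is again in
`V`. Its value at `y` is `v(x)`, and its `L²[a, b]` norm is that of `v` over `[a, b] + (x - y)`, which
lies in the concentric dilate of `[a, b]` by `3` because `|x - y| ≤ b - a`.
-/

open MeasureTheory Complex Set
open scoped ENNReal NNReal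

open scoped Matrix

/-- The linear combination `∑ c_j e_j` of the functions `e_j`, as a function on `ℝ`. -/
noncomputable def esum {N : ℕ} (e : Fin N → ℝ → ℂ) (c : Fin N → ℂ) (y : ℝ) : ℂ := ∑ j, c j * e j y

/-- The Gram matrix of the `e_j` for the inner product of `L²[a, b]`, conjugate-linear in the first
slot. It is singular when the `e_j` are linearly dependent on `[a, b]`. -/
noncomputable def gram {N : ℕ} (e : Fin N → ℝ → ℂ) (a b : ℝ) : Matrix (Fin N) (Fin N) ℂ :=
  fun i j => ∫ y in Icc a b, star (e i y) * e j y

lemma esum_continuous {N : ℕ} {e : Fin N → ℝ → ℂ} (he : ∀ j, Continuous (e j)) (c : Fin N → ℂ) :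
    Continuous (esum e c) := by
  unfold esum; fun_prop

lemma gram_isHermitian {N : ℕ} (e : Fin N → ℝ → ℂ) (a b : ℝ) : (gram e a b).IsHermitian := by
  ext i j
  simp only [Matrix.conjTranspose_apply, gram]
  rw [← starRingEnd_apply, ← integral_conj]
  simp [mul_comm]

lemma integral_star_esum_mul {N : ℕ} {e : Fin N → ℝ → ℂ} (he : ∀ j, Continuous (e j)) (a b : ℝ)
    (c d : Fin N → ℂ) :
    ∫ y in Icc a b, star (esum e c y) * esum e d y = star c ⬝ᵥ (gram e a b *ᵥ d) := by
  have h : ∀ y, star (esum e c y) * esum e d y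
      = ∑ i, ∑ j, star (c i) * ((star (e i y) * e j y) * d j) := by
    intro y
    simp only [esum, star_sum, Finset.sum_mul_sum, star_mul']
    refine Finset.sum_congr rfl fun i _ => Finset.sum_congr rfl fun j _ => by ring
  have hi : ∀ i j, Integrable (fun y => star (c i) * ((star (e i y) * e j y) * d j))
      (volume.restrict (Icc a b)) := fun i j =>
    (Continuous.continuousOn (by fun_prop)).integrableOn_compact isCompact_Icc
  simp_rw [h]
  rw [integral_finsetSum _ fun i _ => integrable_finsetSum _ fun j _ => hi i j]
  simp only [dotProduct, Matrix.mulVec, Finset.mul_sum]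
  refine Finset.sum_congr rfl fun i _ => ?_
  rw [integral_finsetSum _ fun j _ => hi i j]
  refine Finset.sum_congr rfl fun j _ => ?_
  rw [integral_const_mul, integral_mul_const]
  rfl

lemma integral_norm_sq_esum {N : ℕ} {e : Fin N → ℝ → ℂ} (he : ∀ j, Continuous (e j)) (a b : ℝ)
    (c : Fin N → ℂ) :
    ((∫ y in Icc a b, ‖esum e c y‖ ^ 2 : ℝ) : ℂ) = star c ⬝ᵥ (gram e a b *ᵥ c) := by
  rw [← integral_star_esum_mul he, ← integral_complex_ofReal]
  refine integral_congr_ae (.of_forall fun y => ?_)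
  simp only [Complex.ofReal_pow]
  exact (Complex.conj_mul' _).symm

/-- The span of the `e_j` has a generating system `f_k`, orthogonal in `L²[a, b]` with squared norms
`l_k`. The `f_k` have an orthonormal eigenbasis of the Gram matrix as their coefficient vectors, and
the `l_k` are its eigenvalues; some `l_k` vanish if the `e_j` are dependent on `[a, b]`. -/
lemma exists_orthogonal_system {N : ℕ} {e : Fin N → ℝ → ℂ} (he : ∀ j, Continuous (e j)) (a b : ℝ) :
    ∃ (f : Fin N → ℝ → ℂ) (l : Fin N → ℝ), (∀ k, Continuous (f k)) ∧
      (∀ k, ∫ y in Icc a b, ‖f k y‖ ^ 2 = l k) ∧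
      ∀ c : Fin N → ℂ, ∃ d : Fin N → ℂ, (∀ y, esum e c y = ∑ k, d k * f k y) ∧
        ∫ y in Icc a b, ‖esum e c y‖ ^ 2 = ∑ k, l k * ‖d k‖ ^ 2 := by
  have hG := gram_isHermitian e a b
  set u := hG.eigenvectorBasis with hu
  have hortho : ∀ k l, star (u k).ofLp ⬝ᵥ (u l).ofLp = if k = l then 1 else 0 := by
    intro k l
    rw [← u.inner_eq_ite k l, EuclideanSpace.inner_eq_star_dotProduct, dotProduct_comm]
  have hGu : ∀ k, gram e a b *ᵥ (u k).ofLp = hG.eigenvalues k • (u k).ofLp :=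
    fun k => hG.mulVec_eigenvectorBasis k
  refine ⟨fun k => esum e (u k).ofLp, hG.eigenvalues, fun k => esum_continuous he _,
    fun k => ?_, fun c => ?_⟩
  · have h := integral_norm_sq_esum he a b (u k).ofLp
    rw [hGu, dotProduct_smul, hortho] at h
    simpa using congrArg Complex.re h
  · obtain ⟨d, hd⟩ : ∃ d : Fin N → ℂ, c = ∑ k, d k • (u k).ofLp := by
      refine ⟨fun k => inner ℂ (u k) (WithLp.toLp 2 c), ?_⟩
      have h := congrArg WithLp.ofLp (u.sum_repr' (WithLp.toLp 2 c))
      simpa [WithLp.ofLp_sum] using h.symm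
    refine ⟨d, fun y => ?_, ?_⟩
    · simp only [hd, esum, Finset.sum_apply, Pi.smul_apply, smul_eq_mul, Finset.sum_mul,
        Finset.mul_sum]
      rw [Finset.sum_comm]
      exact Finset.sum_congr rfl fun _ _ => Finset.sum_congr rfl fun _ _ => by ring
    · have h := integral_norm_sq_esum he a b c
      apply Complex.ofReal_injective
      rw [h, hd]
      simp only [Matrix.mulVec_sum, Matrix.mulVec_smul, hGu, star_sum, star_smul,
        sum_dotProduct, dotProduct_sum, smul_dotProduct, dotProduct_smul, hortho]
      simp only [smul_eq_mul, Complex.real_smul, mul_ite, mul_one, mul_zero, Finset.sum_ite_eq',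
        Finset.mem_univ, if_true, Complex.ofReal_sum, Complex.ofReal_mul, Complex.ofReal_pow]
      refine Finset.sum_congr rfl fun k _ => ?_
      rw [← Complex.conj_mul', starRingEnd_apply]
      ring

/-- One point `y ∈ [a, b]`, the same for the whole span, at which the evaluation functional has
squared norm at most `N / (b - a)` with respect to `L²[a, b]`. -/
lemma exists_point_bound {N : ℕ} {e : Fin N → ℝ → ℂ} (he : ∀ j, Continuous (e j)) {a b : ℝ}
    (hab : a < b) :
    ∃ y ∈ Icc a b, ∀ c : Fin N → ℂ,
      ‖esum e c y‖ ^ 2 ≤ N / (b - a) * ∫ t in Icc a b, ‖esum e c t‖ ^ 2 := by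
  obtain ⟨f, l, hf, hl, hc⟩ := exists_orthogonal_system he a b
  have hl0 : ∀ k, 0 ≤ l k := fun k => hl k ▸ integral_nonneg fun y => by positivity
  have hi : ∀ k, IntegrableOn (fun y => ‖f k y‖ ^ 2) (Icc a b) := fun k =>
    (Continuous.continuousOn (by have := hf k; fun_prop)).integrableOn_compact isCompact_Icc
  have hi' : ∀ k, IntegrableOn (fun y => ‖f k y‖ ^ 2 / l k) (Icc a b) := fun k =>
    (hi k).div_const _
  have hzero : ∀ k, l k = 0 → ∀ y ∈ Icc a b, f k y = 0 := by
    intro k hk y hy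
    have h1 := hl k
    rw [hk, setIntegral_eq_zero_iff_of_nonneg_ae (.of_forall fun y => by positivity) (hi k)] at h1
    have h2 := Measure.eqOn_Icc_of_ae_eq volume hab.ne h1
      (Continuous.continuousOn (by have := hf k; fun_prop)) continuousOn_const hy
    simpa using h2
  -- When `l k = 0` the junk value `‖f k y‖ ^ 2 / 0 = 0` drops that index from the sum, as it should.
  obtain ⟨y, hy, hK⟩ := exists_le_setAverage (μ := volume) (s := Icc a b)
    (f := fun y => ∑ k, ‖f k y‖ ^ 2 / l k) (by simp [hab]) (by simp)
    (integrable_finsetSum _ fun k _ => hi' k)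
  have hKN : ∑ k, ‖f k y‖ ^ 2 / l k ≤ N / (b - a) := by
    refine hK.trans ?_
    rw [setAverage_eq, integral_finsetSum _ fun k _ => hi' k, smul_eq_mul, Measure.real,
      Real.volume_Icc, ENNReal.toReal_ofReal (by linarith), div_eq_inv_mul]
    have h1 : ∑ k, ∫ t in Icc a b, ‖f k t‖ ^ 2 / l k ≤ ∑ _k : Fin N, (1 : ℝ) := by
      refine Finset.sum_le_sum fun k _ => ?_
      rw [integral_div, hl]
      exact div_self_le_one _
    have h2 : 0 ≤ (b - a)⁻¹ := inv_nonneg.2 (by linarith)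
    simpa using mul_le_mul_of_nonneg_left h1 h2
  refine ⟨y, hy, fun c => ?_⟩
  obtain ⟨d, hd, hd2⟩ := hc c
  have hcs : (∑ k, ‖d k * f k y‖) ^ 2
      ≤ (∑ k, ‖f k y‖ ^ 2 / l k) * ∑ k, l k * ‖d k‖ ^ 2 := by
    refine Finset.sum_sq_le_sum_mul_sum_of_sq_le_mul _ (fun k _ => ?_) (fun k _ => ?_)
      fun k _ => ?_
    · have := hl0 k; positivity
    · have := hl0 k; positivity
    · rcases eq_or_ne (l k) 0 with h | h
      · simp [hzero k h y hy]
      · rw [norm_mul]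
        field_simp
        exact le_rfl
  have hI : 0 ≤ ∑ k, l k * ‖d k‖ ^ 2 := Finset.sum_nonneg fun k _ => by
    have := hl0 k; positivity
  rw [hd2, hd]
  calc ‖∑ k, d k * f k y‖ ^ 2 ≤ (∑ k, ‖d k * f k y‖) ^ 2 := by gcongr; exact norm_sum_le _ _
    _ ≤ _ := hcs
    _ ≤ _ := mul_le_mul_of_nonneg_right hKN hI

/-- The estimate in squared form, with a real-valued integral. -/
lemma norm_sq_exp_sum_le {N : ℕ} (ξ : Fin N → ℝ) {a b : ℝ} (hab : a < b)
    (c : Fin N → ℂ) {x : ℝ} (hx : x ∈ Icc a b) :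
    ‖∑ j, c j * exp (I * (ξ j : ℂ) * (x : ℂ))‖ ^ 2 ≤ N / (b - a) *
      ∫ t in Icc ((a + b) / 2 - 3 * (b - a) / 2) ((a + b) / 2 + 3 * (b - a) / 2),
        ‖∑ j, c j * exp (I * (ξ j : ℂ) * (t : ℂ))‖ ^ 2 := by
  obtain ⟨y, hy, h⟩ := exists_point_bound (e := fun j (t : ℝ) => exp (I * (ξ j : ℂ) * (t : ℂ)))
    (fun j => by fun_prop) hab
  have hN : (0 : ℝ) ≤ N / (b - a) := div_nonneg (by positivity) (by linarith)
  set v : ℝ → ℂ := fun t => ∑ j, c j * exp (I * (ξ j : ℂ) * (t : ℂ)) with hv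
  have hvc : Continuous v := by fun_prop
  -- Translation invariance: coefficients `c j * exp (I * ξ j * (x - y))` give `t ↦ v (t + (x - y))`.
  have htr : ∀ t, esum (fun j (t : ℝ) => exp (I * (ξ j : ℂ) * (t : ℂ)))
      (fun j => c j * exp (I * (ξ j : ℂ) * ((x - y : ℝ) : ℂ))) t = v (t + (x - y)) := by
    intro t
    simp only [esum, hv]
    refine Finset.sum_congr rfl fun j _ => ?_
    rw [mul_assoc, ← Complex.exp_add]
    congr 2
    push_cast
    ring
  have h1 := h fun j => c j * exp (I * (ξ j : ℂ) * ((x - y : ℝ) : ℂ))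
  simp only [htr, add_sub_cancel] at h1
  refine h1.trans (mul_le_mul_of_nonneg_left ?_ hN)
  rw [integral_Icc_eq_integral_Ioc, ← intervalIntegral.integral_of_le hab.le,
    intervalIntegral.integral_comp_add_right (fun t => ‖v t‖ ^ 2),
    intervalIntegral.integral_of_le (by linarith), ← integral_Icc_eq_integral_Ioc]
  refine setIntegral_mono_set
    ((Continuous.continuousOn (by fun_prop)).integrableOn_compact isCompact_Icc)
    (.of_forall fun t => by positivity) (LE.le.eventuallyLE ?_)
  exact Icc_subset_Icc (by linarith [hx.1, hy.2]) (by linarith [hx.2, hy.1])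

/-- The Borwein–Erdélyi estimate: for `v` in the span of `{e^{i ξ_j x} : 1 ≤ j ≤ N}` and
`I = [a, b]` a bounded interval of positive length (with `3I` the concentric dilate),
`sup_{x ∈ I} |v(x)| ≤ N^{1/2} |I|^{-1/2} ‖v‖_{L²(3I)}`. -/
theorem borwein_erdelyi (N : ℕ) (hN : 1 ≤ N) (ξ : Fin N → ℝ) (a b : ℝ) (hab : a < b)
    (c : Fin N → ℂ) (x : ℝ) (hx : x ∈ Set.Icc a b) :
    (‖∑ j, c j * Complex.exp (Complex.I * (ξ j : ℂ) * (x : ℂ))‖₊ : ℝ≥0∞)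
      ≤ (N : ℝ≥0∞) ^ (1/2 : ℝ) * ENNReal.ofReal (b - a) ^ (-(1/2) : ℝ) *
        eLpNorm (fun y : ℝ => ∑ j, c j * Complex.exp (Complex.I * (ξ j : ℂ) * (y : ℂ))) 2
          (volume.restrict
            (Set.Icc ((a + b) / 2 - 3 * (b - a) / 2) ((a + b) / 2 + 3 * (b - a) / 2))) := by
  set J := Set.Icc ((a + b) / 2 - 3 * (b - a) / 2) ((a + b) / 2 + 3 * (b - a) / 2) with hJ
  set v : ℝ → ℂ := fun t => ∑ j, c j * Complex.exp (Complex.I * (ξ j : ℂ) * (t : ℂ)) with hv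
  have hvc : Continuous v := by fun_prop
  have h : ‖v x‖ ^ 2 ≤ N / (b - a) * ∫ t in J, ‖v t‖ ^ 2 := norm_sq_exp_sum_le ξ hab c hx
  have hL : MemLp v 2 (volume.restrict J) :=
    (memLp_two_iff_integrable_sq_norm hvc.aestronglyMeasurable).2
      ((Continuous.continuousOn (by fun_prop)).integrableOn_compact isCompact_Icc)
  have hba : 0 < b - a := sub_pos.2 hab
  rw [hL.eLpNorm_eq_integral_rpow_norm two_ne_zero ENNReal.ofNat_ne_top,
    ENNReal.ofReal_rpow_of_pos hba, ← ENNReal.ofReal_natCast,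
    ENNReal.ofReal_rpow_of_nonneg (by positivity) (by norm_num),
    ← ENNReal.ofReal_mul (by positivity), ← ENNReal.ofReal_mul (by positivity),
    ← enorm_eq_nnnorm, ← ofReal_norm]
  refine ENNReal.ofReal_le_ofReal ?_
  simp only [ENNReal.toReal_ofNat, Real.rpow_ofNat]
  have hI : 0 ≤ ∫ t in J, ‖v t‖ ^ 2 := integral_nonneg fun t => by positivity
  rw [Real.rpow_neg hba.le, ← Real.sqrt_eq_rpow, ← Real.sqrt_eq_rpow, ← one_div (2 : ℝ),
    ← Real.sqrt_eq_rpow, ← div_eq_mul_inv, ← Real.sqrt_div (by positivity),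
    ← Real.sqrt_mul (by positivity)]
  exact Real.le_sqrt_of_sq_le h
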